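/- Let R be a commutative noetherian local ring with depth R = t > 0 and residue field k, and let L be a nonzero finitely generated R-module of finite length. Then res(Tr Ω^n L) = res(Tr Ω^n k) for every integer 0 ≤ n < t. -/

import Mathlib

universe u

open CategoryTheory

namespace ResolvPaper

variable (R : Type u) [CommRing R]

/-- `IsSES f g` means `0 → A → B → C → 0` is a short exact sequence. -/
def IsSES {R : Type u} [CommRing R] {A B C : Type u} [AddCommGroup A] [Module R A]
    [AddCommGroup B] [Module R B] [AddCommGroup C] [Module R C]
    (f : A →ₗ[R] B) (g : B →ₗ[R] C) : Prop :=
  Function.Injective f ∧ Function.Surjective g ∧ LinearMap.range f = LinearMap.ker g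

/-- A resolving subcategory of `mod R`, viewed as a set of bundled modules
closed under isomorphism, containing the finitely generated projective modules, and closed
under direct summands, extensions and syzygies. -/
structure IsResolving (𝒳 : Set (ModuleCat.{u} R)) : Prop where
  fg : ∀ M ∈ 𝒳, Module.Finite R M
  iso_closed : ∀ M N : ModuleCat.{u} R, Nonempty (M ≃ₗ[R] N) → M ∈ 𝒳 → N ∈ 𝒳
  proj_mem : ∀ M : ModuleCat.{u} R, Module.Finite R M → Module.Projective R M → M ∈ 𝒳
  summand_closed : ∀ M N : ModuleCat.{u} R, ModuleCat.of R (↥M × ↥N) ∈ 𝒳 → M ∈ 𝒳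
  ext_closed : ∀ (A B C : ModuleCat.{u} R) (f : A →ₗ[R] B) (g : B →ₗ[R] C),
    IsSES f g → A ∈ 𝒳 → C ∈ 𝒳 → B ∈ 𝒳
  syzygy_closed : ∀ (K P M : ModuleCat.{u} R) (f : K →ₗ[R] P) (g : P →ₗ[R] M),
    IsSES f g → Module.Finite R K → Module.Finite R P → Module.Projective R P →
    M ∈ 𝒳 → K ∈ 𝒳

/-- The resolving closure: the smallest resolving subcategory containing `S`. -/
def resClosure (S : Set (ModuleCat.{u} R)) : Set (ModuleCat.{u} R) :=
  ⋂₀ {𝒳 | IsResolving R 𝒳 ∧ S ⊆ 𝒳}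

/-- An extension-closed subcategory of `mod R`: closed under isomorphism,
direct summands and extensions. -/
def IsExtClosed (𝒳 : Set (ModuleCat.{u} R)) : Prop :=
  (∀ M N : ModuleCat.{u} R, Nonempty (M ≃ₗ[R] N) → M ∈ 𝒳 → N ∈ 𝒳) ∧
  (∀ M N : ModuleCat.{u} R, ModuleCat.of R (↥M × ↥N) ∈ 𝒳 → M ∈ 𝒳) ∧
  (∀ (A B C : ModuleCat.{u} R) (f : A →ₗ[R] B) (g : B →ₗ[R] C),
    IsSES f g → A ∈ 𝒳 → C ∈ 𝒳 → B ∈ 𝒳)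

/-- The extension closure of a set of modules. -/
def extClosure (S : Set (ModuleCat.{u} R)) : Set (ModuleCat.{u} R) :=
  ⋂₀ {𝒳 | IsExtClosed R 𝒳 ∧ S ⊆ 𝒳}

/-- `add R`: direct summands of finite free modules. -/
def addR : Set (ModuleCat.{u} R) :=
  {M | ∃ (n : ℕ) (N : ModuleCat.{u} R), Nonempty ((↥M × ↥N) ≃ₗ[R] (Fin n → R))}

/-- `pdLE n M` : the projective dimension of `M` is at most `n`. -/
def pdLE : ℕ → ModuleCat.{u} R → Prop
  | 0, M => Module.Projective R M
  | n+1, M => ∃ (K P : ModuleCat.{u} R) (f : K →ₗ[R] P) (g : P →ₗ[R] M),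
      Module.Finite R P ∧ Module.Projective R P ∧ IsSES f g ∧ pdLE n K

/-- The projective dimension, an element of `WithBot ℕ∞`; the zero module
has projective dimension `⊥ = -∞`. -/
noncomputable def pdim (M : ModuleCat.{u} R) : WithBot ℕ∞ :=
  sInf {x : WithBot ℕ∞ | (x = ⊥ ∧ Subsingleton M) ∨ ∃ n : ℕ, x = (n : ℕ∞) ∧ pdLE R n M}

/-- The depth of `M` with respect to the ideal `I`: the supremum of lengths of weakly
`M`-regular sequences contained in `I`.  The zero module has depth `∞`. -/
noncomputable def depthE (I : Ideal R) (M : Type u) [AddCommGroup M] [Module R M] : ℕ∞ :=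
  sSup {x : ℕ∞ | ∃ rs : List R, (∀ r ∈ rs, r ∈ I) ∧
    RingTheory.Sequence.IsWeaklyRegular M rs ∧ x = rs.length}

/-- The grade of an ideal: the length of a maximal `R`-regular sequence in `I`. -/
noncomputable def gradeE (I : Ideal R) : ℕ∞ := depthE R I R

/-- A grade consistent function on `Spec R`. -/
def GradeConsistent (f : PrimeSpectrum R → ℕ) : Prop :=
  (∀ p : PrimeSpectrum R, (f p : ℕ∞) ≤ gradeE R p.asIdeal) ∧
  (∀ p q : PrimeSpectrum R, p.asIdeal ≤ q.asIdeal → f p ≤ f q)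

/-- The localization of a module at a prime, as a module over the local ring `R_p`. -/
noncomputable abbrev localizeM (p : PrimeSpectrum R) (M : ModuleCat.{u} R) :
    ModuleCat.{u} (Localization.AtPrime p.asIdeal) :=
  ModuleCat.of (Localization.AtPrime p.asIdeal) (LocalizedModule p.asIdeal.primeCompl M)

/-- `pd_{R_p} M_p`. -/
noncomputable def localPdim (p : PrimeSpectrum R) (M : ModuleCat.{u} R) : WithBot ℕ∞ :=
  pdim (Localization.AtPrime p.asIdeal) (localizeM R p M)

/-- `depth_{R_p} M_p`. -/
noncomputable def localDepth (p : PrimeSpectrum R) (M : ModuleCat.{u} R) : ℕ∞ :=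
  depthE (Localization.AtPrime p.asIdeal)
    (IsLocalRing.maximalIdeal (Localization.AtPrime p.asIdeal))
    (LocalizedModule p.asIdeal.primeCompl M)

/-- The height of a prime ideal. -/
noncomputable def heightE (p : PrimeSpectrum R) : ℕ∞ := Order.height p

/-- `PD(R)` : finitely generated modules of finite projective dimension. -/
def PDcat : Set (ModuleCat.{u} R) :=
  {M | Module.Finite R M ∧ ∃ n : ℕ, pdLE R n M}

/-- `MCM(R)` : maximal Cohen-Macaulay modules. -/
def MCMcat : Set (ModuleCat.{u} R) :=
  {M | Module.Finite R M ∧ ∀ p : PrimeSpectrum R, heightE R p ≤ localDepth R p M}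

/-- The nonfree locus of a module. -/
def NF (M : ModuleCat.{u} R) : Set (PrimeSpectrum R) :=
  {p | ¬ Module.Free (Localization.AtPrime p.asIdeal) (LocalizedModule p.asIdeal.primeCompl M)}

/-- The infinite projective dimension locus of a module. -/
def IPD (M : ModuleCat.{u} R) : Set (PrimeSpectrum R) :=
  {p | localPdim R p M = (⊤ : WithBot ℕ∞)}

/-- The infinite projective dimension locus of a collection of modules. -/
def IPDcat (𝒳 : Set (ModuleCat.{u} R)) : Set (PrimeSpectrum R) :=
  ⋃ M ∈ 𝒳, IPD R M

/-- The modules in `mod R` whose infinite projective dimension locus lies in `W`. -/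
def IPDinv (W : Set (PrimeSpectrum R)) : Set (ModuleCat.{u} R) :=
  {M | Module.Finite R M ∧ IPD R M ⊆ W}

/-- A specialization closed subset of `Spec R`. -/
def SpecClosed (W : Set (PrimeSpectrum R)) : Prop :=
  ∀ p ∈ W, ∀ q : PrimeSpectrum R, p.asIdeal ≤ q.asIdeal → q ∈ W

/-- Membership in `add 𝒳_p`: direct summands of localizations of finite direct sums
of members of `𝒳`. -/
def memAddLocal (𝒳 : Set (ModuleCat.{u} R)) (p : PrimeSpectrum R)
    (N : ModuleCat.{u} (Localization.AtPrime p.asIdeal)) : Prop :=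
  ∃ (n : ℕ) (X : Fin n → ModuleCat.{u} R), (∀ i, X i ∈ 𝒳) ∧
    ∃ (N' : ModuleCat.{u} (Localization.AtPrime p.asIdeal)),
      Nonempty ((↥N × ↥N') ≃ₗ[Localization.AtPrime p.asIdeal]
        ((i : Fin n) → LocalizedModule p.asIdeal.primeCompl (X i)))

/-- `K` is an `n`-th syzygy of `M` computed from a minimal free resolution over the
local ring `S`. -/
def IsMinSyz (S : Type u) [CommRing S] [IsLocalRing S] :
    ℕ → ModuleCat.{u} S → ModuleCat.{u} S → Prop
  | 0, M, K => Nonempty (K ≃ₗ[S] M)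
  | n+1, M, K => ∃ (F : ModuleCat.{u} S) (g : F →ₗ[S] M) (K' : ModuleCat.{u} S)
      (i : K' →ₗ[S] F),
      Module.Finite S F ∧ Module.Free S F ∧ Function.Surjective g ∧
      (LinearMap.ker g ≤ (IsLocalRing.maximalIdeal S) • (⊤ : Submodule S F)) ∧
      Function.Injective i ∧ LinearMap.range i = LinearMap.ker g ∧
      IsMinSyz S n K' K

/-- `K` is an `n`-th syzygy of `M` in some projective resolution (over any ring). -/
def IsSyz : ℕ → ModuleCat.{u} R → ModuleCat.{u} R → Prop
  | 0, M, K => Nonempty (K ≃ₗ[R] M)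
  | n+1, M, K => ∃ (F : ModuleCat.{u} R) (g : F →ₗ[R] M) (K' : ModuleCat.{u} R)
      (i : K' →ₗ[R] F),
      Module.Finite R F ∧ Module.Projective R F ∧ Function.Surjective g ∧
      Function.Injective i ∧ LinearMap.range i = LinearMap.ker g ∧
      IsSyz n K' K

/-- `T` is (isomorphic to) the Auslander transpose of `M`, computed from a minimal
free presentation over the local ring `S`. -/
def IsTranspose (S : Type u) [CommRing S] [IsLocalRing S] (M T : ModuleCat.{u} S) : Prop :=
  ∃ (F1 F0 : ModuleCat.{u} S) (d : F1 →ₗ[S] F0) (e : F0 →ₗ[S] M),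
    Module.Finite S F0 ∧ Module.Free S F0 ∧ Module.Finite S F1 ∧ Module.Free S F1 ∧
    Function.Surjective e ∧ LinearMap.range d = LinearMap.ker e ∧
    LinearMap.ker e ≤ (IsLocalRing.maximalIdeal S) • (⊤ : Submodule S F0) ∧
    LinearMap.ker d ≤ (IsLocalRing.maximalIdeal S) • (⊤ : Submodule S F1) ∧
    Nonempty (T ≃ₗ[S] ((Module.Dual S F1) ⧸ LinearMap.range d.dualMap))

/-- `T` is (isomorphic to) `Tr Ω^n M` over the local ring `S`. -/
def IsTrOmega (S : Type u) [CommRing S] [IsLocalRing S] (n : ℕ) (M T : ModuleCat.{u} S) :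
    Prop :=
  ∃ K : ModuleCat.{u} S, IsMinSyz S n M K ∧ IsTranspose S K T

/-- Resolving subcategory `𝒳` is dominant on `W ⊆ Spec R`. -/
def DominantOn (𝒳 : Set (ModuleCat.{u} R)) (W : Set (PrimeSpectrum R)) : Prop :=
  ∀ p ∈ W, ∃ (n : ℕ) (K : ModuleCat.{u} (Localization.AtPrime p.asIdeal)),
    IsMinSyz (Localization.AtPrime p.asIdeal) n
      (ModuleCat.of (Localization.AtPrime p.asIdeal)
        (IsLocalRing.ResidueField (Localization.AtPrime p.asIdeal))) K ∧
    memAddLocal R 𝒳 p K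

/-- Dominant resolving subcategory. -/
def Dominant (𝒳 : Set (ModuleCat.{u} R)) : Prop := DominantOn R 𝒳 Set.univ

/-- A (noetherian) local ring is Cohen-Macaulay if its depth equals its Krull dimension. -/
def IsCMLocalRing (S : Type u) [CommRing S] [IsLocalRing S] : Prop :=
  IsNoetherianRing S ∧
    ((depthE S (IsLocalRing.maximalIdeal S) S : WithBot ℕ∞) = ringKrullDim S)

/-- A regular local ring: a noetherian local ring whose maximal ideal is generated by
`dim S` elements. -/
def IsRegLocalRing (S : Type u) [CommRing S] [IsLocalRing S] : Prop :=
  IsNoetherianRing S ∧ ∃ s : Finset S,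
    Ideal.span (s : Set S) = IsLocalRing.maximalIdeal S ∧
    ringKrullDim S = (s.card : WithBot ℕ∞)

/-- The singular locus of `R`. -/
def SingLocus : Set (PrimeSpectrum R) :=
  {p | ¬ IsRegLocalRing (Localization.AtPrime p.asIdeal)}

/-- A hypersurface local ring: the completion is a quotient of a regular local ring by
one element. -/
def IsHypersurfaceLocalRing (S : Type u) [CommRing S] [IsLocalRing S] : Prop :=
  ∃ (T : Type u) (_ : CommRing T) (_ : IsLocalRing T) (f : T),
    IsRegLocalRing T ∧
    Nonempty ((AdicCompletion (IsLocalRing.maximalIdeal S) S) ≃+* (T ⧸ Ideal.span {f}))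

/-- A complete intersection local ring: the completion is a quotient of a regular local
ring by a regular sequence. -/
def IsCompleteIntersectionLocalRing (S : Type u) [CommRing S] [IsLocalRing S] : Prop :=
  ∃ (T : Type u) (_ : CommRing T) (_ : IsLocalRing T) (rs : List T),
    IsRegLocalRing T ∧ RingTheory.Sequence.IsRegular T rs ∧
    Nonempty ((AdicCompletion (IsLocalRing.maximalIdeal S) S) ≃+*
      (T ⧸ Ideal.ofList rs))

/-- The subquotient `A / (A ⊓ B)` of two submodules, used for homology. -/
def subquot {S M : Type u} [CommRing S] [AddCommGroup M] [Module S M]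
    (A B : Submodule S M) : Type u :=
  A ⧸ (B.comap A.subtype)

noncomputable instance {S M : Type u} [CommRing S] [AddCommGroup M] [Module S M]
    (A B : Submodule S M) : AddCommGroup (subquot A B) :=
  inferInstanceAs (AddCommGroup (A ⧸ (B.comap A.subtype)))

noncomputable instance {S M : Type u} [CommRing S] [AddCommGroup M] [Module S M]
    (A B : Submodule S M) : Module S (subquot A B) :=
  inferInstanceAs (Module S (A ⧸ (B.comap A.subtype)))

/-- `E` is (isomorphic to) `Ext^{j+1}_S(M, S)`, computed from a finite free resolution. -/
def IsExtPos (S : Type u) [CommRing S] (j : ℕ) (M E : ModuleCat.{u} S) : Prop :=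
  ∃ (F : ℕ → ModuleCat.{u} S) (d : ∀ i : ℕ, (F (i+1) : Type u) →ₗ[S] F i)
    (e : (F 0 : Type u) →ₗ[S] M),
    (∀ i, Module.Finite S (F i)) ∧ (∀ i, Module.Free S (F i)) ∧
    Function.Surjective e ∧ LinearMap.range (d 0) = LinearMap.ker e ∧
    (∀ i, LinearMap.range (d (i+1)) = LinearMap.ker (d i)) ∧
    Nonempty (E ≃ₗ[S]
      subquot (LinearMap.ker ((d (j+1)).dualMap)) (LinearMap.range ((d j).dualMap)))

/-- `T` is (isomorphic to) `Tor_n^S(M, N)`, computed from a projective resolution of `M`. -/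
def IsTor (S : Type u) [CommRing S] (n : ℕ) (M N T : ModuleCat.{u} S) : Prop :=
  ∃ (F : ℕ → ModuleCat.{u} S) (d : ∀ i : ℕ, (F (i+1) : Type u) →ₗ[S] F i)
    (e : (F 0 : Type u) →ₗ[S] M),
    (∀ i, Module.Projective S (F i)) ∧
    Function.Surjective e ∧ LinearMap.range (d 0) = LinearMap.ker e ∧
    (∀ i, LinearMap.range (d (i+1)) = LinearMap.ker (d i)) ∧
    (match n with
      | 0 => Nonempty (T ≃ₗ[S] TensorProduct S M N)
      | (j+1) => Nonempty (T ≃ₗ[S]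
          subquot (LinearMap.ker (LinearMap.rTensor (↥N) (d j)))
            (LinearMap.range (LinearMap.rTensor (↥N) (d (j+1))))))

/-- `idLE n M` : the injective dimension of `M` is at most `n`. -/
def idLE (S : Type u) [CommRing S] : ℕ → ModuleCat.{u} S → Prop
  | 0, M => Module.Injective S M
  | n+1, M => ∃ (I C : ModuleCat.{u} S) (f : M →ₗ[S] I) (g : I →ₗ[S] C),
      IsSES f g ∧ Module.Injective S I ∧ idLE S n C

/-- `PD_0^n(R)` over a local ring: modules of projective dimension at most `n` that are
free on the punctured spectrum. -/
def PD0n [IsLocalRing R] (n : ℕ) : Set (ModuleCat.{u} R) :=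
  {M | Module.Finite R M ∧ pdLE R n M ∧
    ∀ p : PrimeSpectrum R, p.asIdeal ≠ IsLocalRing.maximalIdeal R →
      Module.Free (Localization.AtPrime p.asIdeal) (LocalizedModule p.asIdeal.primeCompl M)}

/-- `PD_0(R)` over a local ring: modules of finite projective dimension that are
free on the punctured spectrum. -/
def PD0 [IsLocalRing R] : Set (ModuleCat.{u} R) :=
  {M | Module.Finite R M ∧ (∃ n : ℕ, pdLE R n M) ∧
    ∀ p : PrimeSpectrum R, p.asIdeal ≠ IsLocalRing.maximalIdeal R →
      Module.Free (Localization.AtPrime p.asIdeal) (LocalizedModule p.asIdeal.primeCompl M)}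

/-- The residue field of a local ring, as a bundled module. -/
noncomputable abbrev residueMod (S : Type u) [CommRing S] [IsLocalRing S] : ModuleCat.{u} S :=
  ModuleCat.of S (IsLocalRing.ResidueField S)

/-!
Up to finite projective summands `Tr Ω^n L` does not depend on the resolutions, so for a resolving
`𝒳` it makes sense to ask whether `Tr Ω^n L ∈ 𝒳`. If `Ext^n(L', R) = 0`, an exact sequence
`0 → L' → L → L'' → 0` induces `0 → Tr Ω^n L'' → Tr Ω^n L → Tr Ω^n L' → 0`, and this vanishing holds
for `L'` of finite length because `n < depth R`. Induction on the length therefore gives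
`Tr Ω^n L ∈ 𝒳` from `Tr Ω^n k ∈ 𝒳`.

Conversely, choose `N ⊆ L` with `L/N = k`. In `0 → Tr Ω^n k → Tr Ω^n L → Tr Ω^n N → 0` the left term
lies in `𝒳` as soon as the middle one and a syzygy of the right one do, and the latter holds, by the
first half, if a syzygy of `Tr Ω^n k` lies in `𝒳`. So one descends along the syzygies of `Tr Ω^n k`,
starting from the `(n + 1)`-st, which is projective since `Ext^i(k, R) = 0` for `i ≤ n`.
-/

section

variable {R}

section Diagrams

variable {A B C A' B' C' KA KB KC TA TB TC Q : Type u}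
  [AddCommGroup A] [Module R A] [AddCommGroup B] [Module R B] [AddCommGroup C] [Module R C]
  [AddCommGroup A'] [Module R A'] [AddCommGroup B'] [Module R B'] [AddCommGroup C'] [Module R C']
  [AddCommGroup KA] [Module R KA] [AddCommGroup KB] [Module R KB] [AddCommGroup KC] [Module R KC]
  [AddCommGroup TA] [Module R TA] [AddCommGroup TB] [Module R TB] [AddCommGroup TC] [Module R TC]
  [AddCommGroup Q] [Module R Q]
  {f : A →ₗ[R] B} {g : B →ₗ[R] C} {f' : A' →ₗ[R] B'} {g' : B' →ₗ[R] C'}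

lemma IsSES.exact (h : IsSES f g) : Function.Exact f g :=
  LinearMap.exact_iff.2 h.2.2.symm

lemma isSES_of_exact (hf : Function.Injective f) (hg : Function.Surjective g)
    (h : Function.Exact f g) : IsSES f g :=
  ⟨hf, hg, (LinearMap.exact_iff.1 h).symm⟩

lemma isSES_subtype_ker (hg : Function.Surjective g) : IsSES (LinearMap.ker g).subtype g :=
  ⟨Subtype.val_injective, hg, Submodule.range_subtype _⟩

lemma isSES_inl_snd : IsSES (LinearMap.inl R A B) (LinearMap.snd R A B) :=
  ⟨LinearMap.inl_injective, LinearMap.snd_surjective, LinearMap.range_inl R A B⟩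

lemma IsSES.comp_linearEquiv (h : IsSES f g) (e : C ≃ₗ[R] C') : IsSES f (e.toLinearMap ∘ₗ g) :=
  ⟨h.1, e.surjective.comp h.2.1, by rw [h.2.2, LinearEquiv.ker_comp]⟩

lemma IsSES.exists_lift (h : IsSES f g) {φ : Q →ₗ[R] B} (hφ : g ∘ₗ φ = 0) :
    ∃ ψ : Q →ₗ[R] A, f ∘ₗ ψ = φ :=
  ⟨φ.codRestrictOfInjective f h.1 fun x => (h.exact (φ x)).1 (LinearMap.congr_fun hφ x),
    LinearMap.codRestrictOfInjective_comp φ f h.1 _⟩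

lemma exists_lift_of_exact [Module.Projective R Q] (h : Function.Exact f g) {φ : Q →ₗ[R] B}
    (hφ : g ∘ₗ φ = 0) : ∃ ψ : Q →ₗ[R] A, f ∘ₗ ψ = φ := by
  obtain ⟨ψ, hψ⟩ := Module.projective_lifting_property f.rangeRestrict
    (φ.codRestrict f.range fun x => (h (φ x)).1 (LinearMap.congr_fun hφ x))
    f.surjective_rangeRestrict
  exact ⟨ψ, LinearMap.ext fun x => congrArg Subtype.val (LinearMap.congr_fun hψ x)⟩

lemma exists_desc_of_exact (h : Function.Exact f g) (hg : Function.Surjective g)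
    {φ : B →ₗ[R] Q} (hφ : φ ∘ₗ f = 0) : ∃ ψ : C →ₗ[R] Q, ψ ∘ₗ g = φ :=
  (LinearMap.exact_lcomp_of_exact_of_surjective Q h hg φ).1 hφ

lemma exact_dualMap (h : Function.Exact f g) (hg : Function.Surjective g) :
    Function.Exact g.dualMap f.dualMap :=
  LinearMap.exact_lcomp_of_exact_of_surjective R h hg

lemma exists_isSES_ker {α : A →ₗ[R] A'} {β : B →ₗ[R] B'} {γ : C →ₗ[R] C'}
    {a : KA →ₗ[R] A} {b : KB →ₗ[R] B} {c : KC →ₗ[R] C}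
    (h : IsSES f g) (h' : IsSES f' g') (ha : IsSES a α) (hb : IsSES b β) (hc : IsSES c γ)
    (hαβ : β ∘ₗ f = f' ∘ₗ α) (hβγ : γ ∘ₗ g = g' ∘ₗ β) :
    ∃ (j : KA →ₗ[R] KB) (q : KB →ₗ[R] KC), IsSES j q ∧ b ∘ₗ j = f ∘ₗ a ∧ c ∘ₗ q = g ∘ₗ b := by
  obtain ⟨j, hj⟩ : ∃ j : KA →ₗ[R] KB, b ∘ₗ j = f ∘ₗ a := hb.exists_lift <| by
    rw [← LinearMap.comp_assoc, hαβ, LinearMap.comp_assoc, ha.exact.linearMap_comp_eq_zero,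
      LinearMap.comp_zero]
  obtain ⟨q, hq⟩ : ∃ q : KB →ₗ[R] KC, c ∘ₗ q = g ∘ₗ b := hc.exists_lift <| by
    rw [← LinearMap.comp_assoc, hβγ, LinearMap.comp_assoc, hb.exact.linearMap_comp_eq_zero,
      LinearMap.comp_zero]
  refine ⟨j, q, isSES_of_exact ?_ ?_ ?_, hj, hq⟩
  all_goals simp only [LinearMap.ext_iff, LinearMap.comp_apply] at hj hq hαβ hβγ
  · exact .of_comp (f := b) <| (funext hj : b ∘ j = f ∘ a) ▸ h.1.comp ha.1
  · intro z
    obtain ⟨y, hy⟩ := h.2.1 (c z)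
    obtain ⟨x', hx'⟩ := (h'.exact (β y)).1 <| by
      rw [← hβγ, hy, hc.exact.apply_apply_eq_zero]
    obtain ⟨x, rfl⟩ := ha.2.1 x'
    obtain ⟨w, hw⟩ := (hb.exact (y - f x)).1 <| by rw [map_sub, hαβ, hx', sub_self]
    refine ⟨w, hc.1 ?_⟩
    rw [hq, hw, map_sub, hy, h.exact.apply_apply_eq_zero, sub_zero]
  · intro y
    constructor
    · intro hy
      obtain ⟨x, hx⟩ := (h.exact (b y)).1 <| by rw [← hq, hy, map_zero]
      obtain ⟨w, rfl⟩ := (ha.exact x).1 <| h'.1 <| by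
        rw [← hαβ, hx, hb.exact.apply_apply_eq_zero, map_zero]
      exact ⟨w, hb.1 <| by rw [hj, hx]⟩
    · rintro ⟨w, rfl⟩
      exact hc.1 <| by rw [hq, hj, h.exact.apply_apply_eq_zero, map_zero]

lemma exists_isSES_coker {α : A →ₗ[R] A'} {β : B →ₗ[R] B'} {γ : C →ₗ[R] C'}
    {a : A' →ₗ[R] TA} {b : B' →ₗ[R] TB} {c : C' →ₗ[R] TC}
    (h : IsSES f g) (h' : IsSES f' g')
    (ha : Function.Exact α a) (ha' : Function.Surjective a)
    (hb : Function.Exact β b) (hb' : Function.Surjective b)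
    (hc : Function.Exact γ c) (hc' : Function.Surjective c)
    (hαβ : β ∘ₗ f = f' ∘ₗ α) (hβγ : γ ∘ₗ g = g' ∘ₗ β)
    (hker : ∀ z, γ z = 0 → ∃ y, β y = 0 ∧ g y = z) :
    ∃ (p : TA →ₗ[R] TB) (q : TB →ₗ[R] TC), IsSES p q := by
  obtain ⟨p, hp⟩ : ∃ p : TA →ₗ[R] TB, p ∘ₗ a = b ∘ₗ f' := exists_desc_of_exact ha ha' <| by
    rw [LinearMap.comp_assoc, ← hαβ, ← LinearMap.comp_assoc, hb.linearMap_comp_eq_zero,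
      LinearMap.zero_comp]
  obtain ⟨q, hq⟩ : ∃ q : TB →ₗ[R] TC, q ∘ₗ b = c ∘ₗ g' := exists_desc_of_exact hb hb' <| by
    rw [LinearMap.comp_assoc, ← hβγ, ← LinearMap.comp_assoc, hc.linearMap_comp_eq_zero,
      LinearMap.zero_comp]
  simp only [LinearMap.ext_iff, LinearMap.comp_apply] at hp hq hαβ hβγ
  refine ⟨p, q, isSES_of_exact ?_ ?_ ?_⟩
  · refine (injective_iff_map_eq_zero p).2 fun t ht => ?_
    obtain ⟨x', rfl⟩ := ha' t
    obtain ⟨y, hy⟩ := (hb (f' x')).1 (by rw [← hp, ht])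
    obtain ⟨w, hw, hwy⟩ := hker (g y) (by rw [hβγ, hy, h'.exact.apply_apply_eq_zero])
    obtain ⟨x, hx⟩ := (h.exact (y - w)).1 (by rw [map_sub, hwy, sub_self])
    refine (ha x').2 ⟨x, h'.1 ?_⟩
    rw [← hαβ, hx, map_sub, hw, hy, sub_zero]
  · exact .of_comp (g := b) <| (funext hq : q ∘ b = c ∘ g') ▸ hc'.comp h'.2.1
  · intro t
    obtain ⟨y', rfl⟩ := hb' t
    constructor
    · intro ht
      obtain ⟨z, hz⟩ := (hc (g' y')).1 (by rw [← hq, ht])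
      obtain ⟨y, rfl⟩ := h.2.1 z
      obtain ⟨x', hx'⟩ := (h'.exact (y' - β y)).1 (by rw [map_sub, ← hβγ, hz, sub_self])
      exact ⟨a x', by rw [hp, hx', map_sub, hb.apply_apply_eq_zero, sub_zero]⟩
    · rintro ⟨s, hs⟩
      obtain ⟨x', rfl⟩ := ha' s
      rw [← hs, hp, hq, h'.exact.apply_apply_eq_zero, map_zero]

lemma exists_isSES_coker_of_exact {c : B →ₗ[R] TB} {c' : C →ₗ[R] TC}
    (h : Function.Exact f g) (hc : Function.Exact f c) (hc' : Function.Surjective c)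
    (hg : Function.Exact g c') (hg' : Function.Surjective c') :
    ∃ p : TB →ₗ[R] C, IsSES p c' := by
  obtain ⟨p, hp⟩ := exists_desc_of_exact hc hc' h.linearMap_comp_eq_zero
  refine ⟨p, isSES_of_exact ?_ hg' ?_⟩
  · refine (injective_iff_map_eq_zero p).2 fun t ht => ?_
    obtain ⟨y, rfl⟩ := hc' t
    exact (hc y).2 ((h y).1 (by rw [← hp, LinearMap.comp_apply, ht]))
  · rw [← hp] at hg
    exact (hc'.comp_exact_iff_exact).1 hg

end Diagrams

/-- A short exact sequence `0 → K → P → M → 0` with `P` finite projective, exhibiting `K` as a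
first syzygy of `M`. Minimality is not required, so `K` depends on the choice of `P`. -/
structure IsSyzygySES {K P M : Type u} [AddCommGroup K] [Module R K] [AddCommGroup P] [Module R P]
    [AddCommGroup M] [Module R M] (f : K →ₗ[R] P) (g : P →ₗ[R] M) : Prop where
  isSES : IsSES f g
  finite : Module.Finite R P
  projective : Module.Projective R P

/-- A presentation `P₁ → P₀ → M → 0` of `M` by finite projective modules. -/
structure IsProjPresentation {P₁ P₀ M : Type u} [AddCommGroup P₁] [Module R P₁] [AddCommGroup P₀]
    [Module R P₀] [AddCommGroup M] [Module R M] (d : P₁ →ₗ[R] P₀) (e : P₀ →ₗ[R] M) : Prop where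
  exact : Function.Exact d e
  surjective : Function.Surjective e
  finite₁ : Module.Finite R P₁
  projective₁ : Module.Projective R P₁
  finite₀ : Module.Finite R P₀
  projective₀ : Module.Projective R P₀

/-- `T` is an Auslander transpose of `M`: the cokernel of the dual of the first map of a
presentation of `M` by finite projective modules, not necessarily minimal. -/
def IsAuslanderTranspose (M T : ModuleCat.{u} R) : Prop :=
  ∃ (P₁ P₀ : ModuleCat.{u} R) (d : P₁ →ₗ[R] P₀) (e : P₀ →ₗ[R] M) (ρ : Module.Dual R P₁ →ₗ[R] T),
    IsProjPresentation d e ∧ Function.Exact d.dualMap ρ ∧ Function.Surjective ρ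

/-- `T` is a transpose of an `n`-th syzygy of `L`, computed from a resolution of `L` by finite
projective modules; this is `Tr Ω^n L` up to finite projective summands. -/
def IsTransposeSyz (n : ℕ) (L T : ModuleCat.{u} R) : Prop :=
  ∃ K : ModuleCat.{u} R, IsSyz R n L K ∧ IsAuslanderTranspose K T

section Syzygies

variable {K P M P₁ M' K' P' M'' K'' P'' : Type u}
  [AddCommGroup K] [Module R K] [AddCommGroup P] [Module R P] [AddCommGroup M] [Module R M]
  [AddCommGroup P₁] [Module R P₁]
  [AddCommGroup K'] [Module R K'] [AddCommGroup P'] [Module R P'] [AddCommGroup M'] [Module R M']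
  [AddCommGroup K''] [Module R K''] [AddCommGroup P''] [Module R P'']
  [AddCommGroup M''] [Module R M'']

variable (R) in
lemma exists_isSyzygySES [IsNoetherianRing R] (M : Type u) [AddCommGroup M] [Module R M]
    [Module.Finite R M] : ∃ (K P : ModuleCat.{u} R) (f : K →ₗ[R] P) (g : P →ₗ[R] M),
      Module.Finite R K ∧ IsSyzygySES f g := by
  obtain ⟨m, g, hg⟩ := Module.Finite.exists_fin' R M
  exact ⟨.of R (LinearMap.ker g), .of R (Fin m → R), (LinearMap.ker g).subtype, g,
    inferInstanceAs (Module.Finite R (LinearMap.ker g)), isSES_subtype_ker hg,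
    inferInstanceAs (Module.Finite R (Fin m → R)),
    inferInstanceAs (Module.Projective R (Fin m → R))⟩

lemma IsSyzygySES.isProjPresentation {f : K →ₗ[R] P} {g : P →ₗ[R] M} {g₁ : P₁ →ₗ[R] K}
    (h : IsSyzygySES f g) (hg₁ : Function.Surjective g₁) (hP₁ : Module.Finite R P₁)
    (hP₁' : Module.Projective R P₁) : IsProjPresentation (f ∘ₗ g₁) g where
  exact := (hg₁.comp_exact_iff_exact).2 h.isSES.exact
  surjective := h.isSES.2.1
  finite₁ := hP₁
  projective₁ := hP₁'
  finite₀ := h.finite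
  projective₀ := h.projective

lemma exists_isSES_horseshoe [Module.Projective R P''] {i : M' →ₗ[R] M} {π : M →ₗ[R] M''}
    (hs : IsSES i π) {f' : K' →ₗ[R] P'} {e' : P' →ₗ[R] M'} (h' : IsSES f' e')
    {f'' : K'' →ₗ[R] P''} {e'' : P'' →ₗ[R] M''} (h'' : IsSES f'' e'') :
    ∃ (K : ModuleCat.{u} R) (f : K →ₗ[R] P' × P'') (e : P' × P'' →ₗ[R] M)
      (j : K' →ₗ[R] K) (q : K →ₗ[R] K''),
      IsSES f e ∧ IsSES j q ∧
      e ∘ₗ LinearMap.inl R P' P'' = i ∘ₗ e' ∧ e'' ∘ₗ LinearMap.snd R P' P'' = π ∘ₗ e ∧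
      f ∘ₗ j = LinearMap.inl R P' P'' ∘ₗ f' ∧ f'' ∘ₗ q = LinearMap.snd R P' P'' ∘ₗ f := by
  obtain ⟨s, hs'⟩ := Module.projective_lifting_property π e'' hs.2.1
  let e : P' × P'' →ₗ[R] M := (i ∘ₗ e').coprod s
  have he_inl : e ∘ₗ LinearMap.inl R P' P'' = i ∘ₗ e' := LinearMap.coprod_inl _ _
  have hπe : e'' ∘ₗ LinearMap.snd R P' P'' = π ∘ₗ e := by
    rw [LinearMap.comp_coprod, ← LinearMap.comp_assoc, hs.exact.linearMap_comp_eq_zero, hs',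
      LinearMap.zero_comp, LinearMap.coprod_zero_left]
  have he : Function.Surjective e := by
    intro x
    obtain ⟨p'', hp''⟩ := h''.2.1 (π x)
    obtain ⟨x', hx'⟩ := (hs.exact (x - s p'')).1 <| by
      rw [map_sub, ← hp'', ← hs', LinearMap.comp_apply, sub_self]
    obtain ⟨p', rfl⟩ := h'.2.1 x'
    exact ⟨(p', p''), by simp [e, hx']⟩
  obtain ⟨j, q, hjq, hj, hq⟩ := exists_isSES_ker isSES_inl_snd hs h' (isSES_subtype_ker he) h''
    he_inl hπe
  exact ⟨.of R (LinearMap.ker e), (LinearMap.ker e).subtype, e, j, q, isSES_subtype_ker he, hjq,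
    he_inl, hπe, hj, hq⟩

lemma exists_isSyzygySES_horseshoe {i : M' →ₗ[R] M} {π : M →ₗ[R] M''} (hs : IsSES i π)
    {f' : K' →ₗ[R] P'} {e' : P' →ₗ[R] M'} (h' : IsSyzygySES f' e')
    {f'' : K'' →ₗ[R] P''} {e'' : P'' →ₗ[R] M''} (h'' : IsSyzygySES f'' e'') :
    ∃ (K : ModuleCat.{u} R) (f : K →ₗ[R] P' × P'') (e : P' × P'' →ₗ[R] M)
      (j : K' →ₗ[R] K) (q : K →ₗ[R] K''),
      IsSyzygySES f e ∧ IsSES j q ∧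
      e ∘ₗ LinearMap.inl R P' P'' = i ∘ₗ e' ∧ e'' ∘ₗ LinearMap.snd R P' P'' = π ∘ₗ e ∧
      f ∘ₗ j = LinearMap.inl R P' P'' ∘ₗ f' ∧ f'' ∘ₗ q = LinearMap.snd R P' P'' ∘ₗ f := by
  have := h'.finite; have := h'.projective; have := h''.finite; have := h''.projective
  obtain ⟨K, f, e, j, q, h, hjq⟩ := exists_isSES_horseshoe hs h'.isSES h''.isSES
  exact ⟨K, f, e, j, q, ⟨h, inferInstance, inferInstance⟩, hjq⟩

end Syzygies

section StableRetracts

/-- `A` is a retract of `B` up to maps factoring through a finite projective module, that is,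
a retract in the stable category; syzygies and transposes are functorial only up to this. -/
def IsStableRetract (A B : ModuleCat.{u} R) : Prop :=
  ∃ (u : A →ₗ[R] B) (v : B →ₗ[R] A) (P : ModuleCat.{u} R) (a : A →ₗ[R] P) (b : P →ₗ[R] A),
    Module.Finite R P ∧ Module.Projective R P ∧ v ∘ₗ u = LinearMap.id + b ∘ₗ a

lemma isStableRetract_of_comp_eq_id {A B : ModuleCat.{u} R} {u : A →ₗ[R] B} {v : B →ₗ[R] A}
    (h : v ∘ₗ u = LinearMap.id) : IsStableRetract A B :=
  ⟨u, v, .of R PUnit.{u + 1}, 0, 0, inferInstanceAs (Module.Finite R PUnit.{u + 1}),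
    inferInstanceAs (Module.Projective R PUnit.{u + 1}), by rw [h, LinearMap.zero_comp, add_zero]⟩

lemma IsStableRetract.refl (A : ModuleCat.{u} R) : IsStableRetract A A :=
  isStableRetract_of_comp_eq_id (u := LinearMap.id) (v := LinearMap.id) rfl

lemma IsStableRetract.of_linearEquiv {A B : ModuleCat.{u} R} (e : A ≃ₗ[R] B) :
    IsStableRetract A B :=
  isStableRetract_of_comp_eq_id e.symm_comp

lemma IsStableRetract.trans {A B C : ModuleCat.{u} R} (h : IsStableRetract A B)
    (h' : IsStableRetract B C) : IsStableRetract A C := by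
  obtain ⟨u, v, P, a, b, _, _, huv⟩ := h
  obtain ⟨u', v', P', a', b', _, _, huv'⟩ := h'
  refine ⟨u' ∘ₗ u, v ∘ₗ v', .of R (P × P'), a.prod (a' ∘ₗ u), b.coprod (v ∘ₗ b'),
    inferInstanceAs (Module.Finite R (P × P')), inferInstanceAs (Module.Projective R (P × P')), ?_⟩
  simp only [LinearMap.ext_iff, LinearMap.comp_apply, LinearMap.add_apply, LinearMap.id_apply]
    at huv huv'
  ext x
  simp [huv, huv', add_assoc]

lemma IsStableRetract.of_subsingleton (A B : ModuleCat.{u} R) [Subsingleton A] :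
    IsStableRetract A B :=
  isStableRetract_of_comp_eq_id (u := 0) (v := 0) (LinearMap.ext fun _ => Subsingleton.elim _ _)

lemma IsResolving.prod_mem {𝒳 : Set (ModuleCat.{u} R)} (h𝒳 : IsResolving R 𝒳)
    {A B : ModuleCat.{u} R} (hA : A ∈ 𝒳) (hB : B ∈ 𝒳) : ModuleCat.of R (A × B) ∈ 𝒳 :=
  h𝒳.ext_closed A (.of R (A × B)) B _ _ isSES_inl_snd hA hB

lemma IsResolving.mem_of_comp_eq_id {𝒳 : Set (ModuleCat.{u} R)} (h𝒳 : IsResolving R 𝒳)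
    {A B : ModuleCat.{u} R} {u : A →ₗ[R] B} {v : B →ₗ[R] A} (h : v ∘ₗ u = LinearMap.id)
    (hB : B ∈ 𝒳) : A ∈ 𝒳 := by
  have hv : Function.Exact (LinearMap.ker v).subtype v := LinearMap.exact_subtype_ker_map v
  obtain ⟨e, -⟩ := hv.splitSurjectiveEquiv Subtype.val_injective ⟨u, h⟩
  exact h𝒳.summand_closed A (.of R (LinearMap.ker v))
    (h𝒳.iso_closed B _ ⟨e.trans (LinearEquiv.prodComm R _ _)⟩ hB)

lemma IsResolving.mem_of_isStableRetract {𝒳 : Set (ModuleCat.{u} R)} (h𝒳 : IsResolving R 𝒳)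
    {A B : ModuleCat.{u} R} (h : IsStableRetract A B) (hB : B ∈ 𝒳) : A ∈ 𝒳 := by
  obtain ⟨u, v, P, a, b, hP, hP', huv⟩ := h
  refine h𝒳.mem_of_comp_eq_id (u := u.prod a) (v := v.coprod (-b)) ?_
    (h𝒳.prod_mem hB (h𝒳.proj_mem P hP hP'))
  rw [LinearMap.coprod_comp_prod, huv, LinearMap.neg_comp, add_neg_cancel_right]

lemma IsStableRetract.of_isSyzygySES {K P M K₂ P₂ M₂ : ModuleCat.{u} R} {f : K →ₗ[R] P}
    {g : P →ₗ[R] M} {f₂ : K₂ →ₗ[R] P₂} {g₂ : P₂ →ₗ[R] M₂} (hM : IsStableRetract M M₂)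
    (h : IsSyzygySES f g) (h₂ : IsSyzygySES f₂ g₂) : IsStableRetract K K₂ := by
  obtain ⟨u, v, Q, a, b, _, _, huv⟩ := hM
  have := h.projective; have := h₂.projective
  obtain ⟨u₀, hu₀⟩ := Module.projective_lifting_property g₂ (u ∘ₗ g) h₂.isSES.2.1
  obtain ⟨v₀, hv₀⟩ := Module.projective_lifting_property g (v ∘ₗ g₂) h.isSES.2.1
  obtain ⟨b₀, hb₀⟩ := Module.projective_lifting_property g b h.isSES.2.1
  have hgf := h.isSES.exact.apply_apply_eq_zero
  have hgf₂ := h₂.isSES.exact.apply_apply_eq_zero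
  simp only [LinearMap.ext_iff, LinearMap.comp_apply, LinearMap.add_apply, LinearMap.id_apply]
    at huv hu₀ hv₀ hb₀
  obtain ⟨u', hu'⟩ := h₂.isSES.exists_lift (φ := u₀ ∘ₗ f) (by ext x; simp [hu₀, hgf])
  obtain ⟨v', hv'⟩ := h.isSES.exists_lift (φ := v₀ ∘ₗ f₂) (by ext x; simp [hv₀, hgf₂])
  obtain ⟨k, hk⟩ := h.isSES.exists_lift (φ := v₀ ∘ₗ u₀ - LinearMap.id - b₀ ∘ₗ a ∘ₗ g)
    (by ext x; simp [hv₀, hu₀, huv, hb₀])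
  simp only [LinearMap.ext_iff, LinearMap.comp_apply] at hu' hv' hk
  exact ⟨u', v', P, f, k, h.finite, h.projective,
    LinearMap.ext fun x => h.isSES.1 (by simp [hv', hu', hk, hgf])⟩

lemma IsProjPresentation.exists_lift {P₁ P₀ M Q₁ Q₀ N : Type u} [AddCommGroup P₁] [Module R P₁]
    [AddCommGroup P₀] [Module R P₀] [AddCommGroup M] [Module R M] [AddCommGroup Q₁] [Module R Q₁]
    [AddCommGroup Q₀] [Module R Q₀] [AddCommGroup N] [Module R N]
    {d : P₁ →ₗ[R] P₀} {e : P₀ →ₗ[R] M} {d' : Q₁ →ₗ[R] Q₀} {e' : Q₀ →ₗ[R] N}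
    (h : IsProjPresentation d e) (h' : IsProjPresentation d' e') (u : M →ₗ[R] N) :
    ∃ (u₀ : P₀ →ₗ[R] Q₀) (u₁ : P₁ →ₗ[R] Q₁), e' ∘ₗ u₀ = u ∘ₗ e ∧ d' ∘ₗ u₁ = u₀ ∘ₗ d := by
  have := h.projective₀; have := h.projective₁
  obtain ⟨u₀, hu₀⟩ := Module.projective_lifting_property e' (u ∘ₗ e) h'.surjective
  obtain ⟨u₁, hu₁⟩ := exists_lift_of_exact h'.exact (φ := u₀ ∘ₗ d) <| by
    rw [← LinearMap.comp_assoc, hu₀, LinearMap.comp_assoc, h.exact.linearMap_comp_eq_zero,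
      LinearMap.comp_zero]
  exact ⟨u₀, u₁, hu₀, hu₁⟩

lemma exists_map_coker_dualMap {P₁ P₀ Q₁ Q₀ T S : Type u} [AddCommGroup P₁] [Module R P₁]
    [AddCommGroup P₀] [Module R P₀] [AddCommGroup Q₁] [Module R Q₁] [AddCommGroup Q₀]
    [Module R Q₀] [AddCommGroup T] [Module R T] [AddCommGroup S] [Module R S]
    {d : P₁ →ₗ[R] P₀} {ρ : Module.Dual R P₁ →ₗ[R] T} {d' : Q₁ →ₗ[R] Q₀}
    {ρ' : Module.Dual R Q₁ →ₗ[R] S} (hρ : Function.Exact d.dualMap ρ)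
    (hρ' : Function.Exact d'.dualMap ρ') (hρ's : Function.Surjective ρ')
    {u₀ : P₀ →ₗ[R] Q₀} {u₁ : P₁ →ₗ[R] Q₁} (hu : d' ∘ₗ u₁ = u₀ ∘ₗ d) :
    ∃ τ : S →ₗ[R] T, τ ∘ₗ ρ' = ρ ∘ₗ u₁.dualMap :=
  exists_desc_of_exact hρ' hρ's <| by
    rw [LinearMap.comp_assoc, LinearMap.dualMap_comp_dualMap, hu, ← LinearMap.dualMap_comp_dualMap,
      ← LinearMap.comp_assoc, hρ.linearMap_comp_eq_zero, LinearMap.zero_comp]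

lemma IsProjPresentation.exists_homotopy {P₁ P₀ M Q : Type u} [AddCommGroup P₁] [Module R P₁]
    [AddCommGroup P₀] [Module R P₀] [AddCommGroup M] [Module R M] [AddCommGroup Q] [Module R Q]
    [Module.Projective R Q] {d : P₁ →ₗ[R] P₀} {e : P₀ →ₗ[R] M} {w₀ : P₀ →ₗ[R] P₀}
    {w₁ : P₁ →ₗ[R] P₁} {a : M →ₗ[R] Q} {b : Q →ₗ[R] M} (h : IsProjPresentation d e)
    (hw₀ : e ∘ₗ w₀ = (LinearMap.id + b ∘ₗ a) ∘ₗ e) (hw₁ : d ∘ₗ w₁ = w₀ ∘ₗ d) :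
    ∃ (κ : P₁ →ₗ[R] P₁) (k : P₀ →ₗ[R] P₁), d ∘ₗ κ = 0 ∧ w₁ = LinearMap.id + κ + k ∘ₗ d := by
  have := h.projective₀
  obtain ⟨b₀, hb₀⟩ := Module.projective_lifting_property e b h.surjective
  simp only [LinearMap.ext_iff, LinearMap.comp_apply, LinearMap.add_apply, LinearMap.id_apply]
    at hw₀ hw₁ hb₀
  obtain ⟨k, hk⟩ : ∃ k : P₀ →ₗ[R] P₁, d ∘ₗ k = w₀ - LinearMap.id - b₀ ∘ₗ a ∘ₗ e :=
    exists_lift_of_exact h.exact <| by ext x; simp [hw₀, hb₀]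
  simp only [LinearMap.ext_iff, LinearMap.comp_apply] at hk
  refine ⟨w₁ - LinearMap.id - k ∘ₗ d, k, ?_, by abel⟩
  ext x
  simp [hw₁, hk, h.exact.apply_apply_eq_zero]

lemma IsStableRetract.of_isAuslanderTranspose {M T M₂ T₂ : ModuleCat.{u} R}
    (hM : IsStableRetract M M₂) (h : IsAuslanderTranspose M T)
    (h₂ : IsAuslanderTranspose M₂ T₂) : IsStableRetract T T₂ := by
  obtain ⟨u, v, Q, a, b, _, _, huv⟩ := hM
  obtain ⟨P₁, P₀, d, e, ρ, hde, hρ, hρ'⟩ := h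
  obtain ⟨Q₁, Q₀, d₂, e₂, ρ₂, hde₂, hρ₂, hρ₂'⟩ := h₂
  obtain ⟨u₀, u₁, hu₀, hu₁⟩ := hde.exists_lift hde₂ u
  obtain ⟨v₀, v₁, hv₀, hv₁⟩ := hde₂.exists_lift hde v
  obtain ⟨κ, k, hdκ, hκ⟩ := hde.exists_homotopy (w₀ := v₀ ∘ₗ u₀) (w₁ := v₁ ∘ₗ u₁)
    (by rw [← huv, ← LinearMap.comp_assoc, hv₀, LinearMap.comp_assoc, hu₀, LinearMap.comp_assoc])
    (by rw [← LinearMap.comp_assoc, hv₁, LinearMap.comp_assoc, hu₁, LinearMap.comp_assoc])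
  obtain ⟨τu, hτu⟩ := exists_map_coker_dualMap hρ hρ₂ hρ₂' hu₁
  obtain ⟨τv, hτv⟩ := exists_map_coker_dualMap hρ₂ hρ hρ' hv₁
  obtain ⟨σ, hσ⟩ : ∃ σ : T →ₗ[R] Module.Dual R P₁, σ ∘ₗ ρ = κ.dualMap :=
    exists_desc_of_exact hρ hρ' <| by
      rw [LinearMap.dualMap_comp_dualMap, hdκ]
      exact map_zero Module.Dual.transpose
  have hdual : u₁.dualMap ∘ₗ v₁.dualMap =
      LinearMap.id + κ.dualMap + d.dualMap ∘ₗ k.dualMap := by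
    rw [LinearMap.dualMap_comp_dualMap, hκ]
    ext φ x
    simp only [LinearMap.dualMap_apply, LinearMap.comp_apply, LinearMap.add_apply,
      LinearMap.id_apply, map_add]
  have hρd : ρ ∘ₗ d.dualMap ∘ₗ k.dualMap = 0 := by
    rw [← LinearMap.comp_assoc, hρ.linearMap_comp_eq_zero, LinearMap.zero_comp]
  have := hde.finite₁; have := hde.projective₁
  refine ⟨τv, τu, .of R (Module.Dual R P₁), σ, ρ,
    inferInstanceAs (Module.Finite R (Module.Dual R P₁)),
    inferInstanceAs (Module.Projective R (Module.Dual R P₁)), (LinearMap.cancel_right hρ').1 ?_⟩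
  calc (τu ∘ₗ τv) ∘ₗ ρ = ρ ∘ₗ u₁.dualMap ∘ₗ v₁.dualMap := by
        rw [LinearMap.comp_assoc, hτv, ← LinearMap.comp_assoc, hτu, LinearMap.comp_assoc]
    _ = ρ + ρ ∘ₗ κ.dualMap := by
        rw [hdual, LinearMap.comp_add, LinearMap.comp_add, hρd, add_zero, LinearMap.comp_id]
    _ = (LinearMap.id + ρ ∘ₗ σ) ∘ₗ ρ := by
        rw [LinearMap.add_comp, LinearMap.id_comp, LinearMap.comp_assoc, hσ]

lemma IsStableRetract.of_isSyz {n : ℕ} {L K L₂ K₂ : ModuleCat.{u} R} (hL : IsStableRetract L L₂)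
    (h : IsSyz R n L K) (h₂ : IsSyz R n L₂ K₂) : IsStableRetract K K₂ := by
  induction n generalizing L L₂ with
  | zero =>
    obtain ⟨⟨e⟩, ⟨e₂⟩⟩ := And.intro h h₂
    exact ((of_linearEquiv e).trans hL).trans (of_linearEquiv e₂.symm)
  | succ n ih =>
    obtain ⟨F, g, K', i, hF, hF', hg, hi, hig, hK⟩ := h
    obtain ⟨F₂, g₂, K₂', i₂, hF₂, hF₂', hg₂, hi₂, hig₂, hK₂⟩ := h₂
    exact ih (hL.of_isSyzygySES ⟨⟨hi, hg, hig⟩, hF, hF'⟩ ⟨⟨hi₂, hg₂, hig₂⟩, hF₂, hF₂'⟩) hK hK₂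

end StableRetracts
section Ext

open CategoryTheory.Abelian

variable {K P M N : ModuleCat.{u} R} {f : K →ₗ[R] P} {g : P →ₗ[R] M}

lemma IsSES.shortExact (h : IsSES f g) :
    (ModuleCat.shortComplexOfCompEqZero f g h.exact.linearMap_comp_eq_zero).ShortExact :=
  ModuleCat.shortComplex_shortExact _ h.exact h.1 h.2.1

lemma eq_zero_of_subsingleton_ext_zero (_ : Subsingleton (Ext.{u} M N 0)) (φ : M →ₗ[R] N) :
    φ = 0 :=
  have : Subsingleton (M ⟶ N) := Ext.addEquiv₀.symm.subsingleton
  congrArg ModuleCat.Hom.hom (Subsingleton.elim (ModuleCat.ofHom φ) 0)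

lemma IsSES.exists_extension (h : IsSES f g) (hM : Subsingleton (Ext.{u} M N 1))
    (φ : K →ₗ[R] N) : ∃ ψ : P →ₗ[R] N, ψ ∘ₗ f = φ := by
  obtain ⟨x, hx⟩ := Ext.contravariant_sequence_exact₁ h.shortExact N (Ext.mk₀ (ModuleCat.ofHom φ))
    (n₁ := 1) rfl (hM.elim _ _)
  obtain ⟨ψ, rfl⟩ := (Ext.mk₀_bijective _ _).2 x
  rw [Ext.mk₀_comp_mk₀] at hx
  exact ⟨ψ.hom, congrArg ModuleCat.Hom.hom ((Ext.mk₀_bijective _ _).1 hx)⟩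

lemma IsSyzygySES.subsingleton_ext {n : ℕ} (h : IsSyzygySES f g)
    (hM : Subsingleton (Ext.{u} M N (n + 2))) : Subsingleton (Ext.{u} K N (n + 1)) := by
  have : CategoryTheory.Projective P := (IsProjective.iff_projective P).1 h.projective
  refine subsingleton_of_forall_eq 0 fun x => ?_
  obtain ⟨y, rfl⟩ := Ext.contravariant_sequence_exact₁ h.isSES.shortExact N x
    (n₁ := n + 2) (by omega) (hM.elim _ _)
  rw [Ext.eq_zero_of_projective y, Ext.comp_zero]

end Ext

section Transposes

open CategoryTheory.Abelian

lemma isAuslanderTranspose_quotient {P₁ P₀ M : ModuleCat.{u} R} {d : P₁ →ₗ[R] P₀}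
    {e : P₀ →ₗ[R] M} (h : IsProjPresentation d e) :
    IsAuslanderTranspose M (.of R (Module.Dual R P₁ ⧸ LinearMap.range d.dualMap)) :=
  ⟨P₁, P₀, d, e, Submodule.mkQ _, h, LinearMap.exact_map_mkQ_range _, Submodule.mkQ_surjective _⟩

lemma IsAuslanderTranspose.finite {M T : ModuleCat.{u} R} (h : IsAuslanderTranspose M T) :
    Module.Finite R T := by
  obtain ⟨P₁, P₀, d, e, ρ, hde, -, hρ⟩ := h
  have := hde.finite₁; have := hde.projective₁
  exact .of_surjective ρ hρ

lemma exists_isProjPresentation [IsNoetherianRing R] (M : ModuleCat.{u} R) [Module.Finite R M] :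
    ∃ (P₁ P₀ : ModuleCat.{u} R) (d : P₁ →ₗ[R] P₀) (e : P₀ →ₗ[R] M), IsProjPresentation d e := by
  obtain ⟨K, P, f, g, _, h⟩ := exists_isSyzygySES R M
  obtain ⟨_, _, _, _, _, h₁⟩ := exists_isSyzygySES R K
  exact ⟨_, _, _, _, h.isProjPresentation h₁.isSES.2.1 h₁.finite h₁.projective⟩

lemma isSES_dualMap_snd_inl {A B : Type u} [AddCommGroup A] [Module R A] [AddCommGroup B]
    [Module R B] : IsSES (LinearMap.snd R A B).dualMap (LinearMap.inl R A B).dualMap :=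
  isSES_of_exact (LinearMap.dualMap_injective_of_surjective LinearMap.snd_surjective)
    (fun φ => ⟨φ ∘ₗ LinearMap.fst R A B, LinearMap.ext fun _ => rfl⟩)
    (exact_dualMap isSES_inl_snd.exact LinearMap.snd_surjective)

lemma exists_isProjPresentation_horseshoe [IsNoetherianRing R] {M' M M'' : ModuleCat.{u} R}
    [Module.Finite R M'] [Module.Finite R M''] {i : M' →ₗ[R] M} {π : M →ₗ[R] M''}
    (hs : IsSES i π) :
    ∃ (P₁' P₀' P₁'' P₀'' : ModuleCat.{u} R) (d' : P₁' →ₗ[R] P₀') (e' : P₀' →ₗ[R] M')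
      (d : P₁' × P₁'' →ₗ[R] P₀' × P₀'') (e : P₀' × P₀'' →ₗ[R] M)
      (d'' : P₁'' →ₗ[R] P₀'') (e'' : P₀'' →ₗ[R] M''),
      IsProjPresentation d' e' ∧ IsProjPresentation d e ∧ IsProjPresentation d'' e'' ∧
      e ∘ₗ LinearMap.inl R P₀' P₀'' = i ∘ₗ e' ∧
      d ∘ₗ LinearMap.inl R P₁' P₁'' = LinearMap.inl R P₀' P₀'' ∘ₗ d' ∧
      d'' ∘ₗ LinearMap.snd R P₁' P₁'' = LinearMap.snd R P₀' P₀'' ∘ₗ d := by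
  obtain ⟨K', P', f', e', _, h'⟩ := exists_isSyzygySES R M'
  obtain ⟨K'', P'', f'', e'', _, h''⟩ := exists_isSyzygySES R M''
  obtain ⟨K, f, e, j, q, h, hjq, he, -, hfj, hfq⟩ := exists_isSyzygySES_horseshoe hs h' h''
  obtain ⟨_, Q', _, g', _, h₁'⟩ := exists_isSyzygySES R K'
  obtain ⟨_, Q'', _, g'', _, h₁''⟩ := exists_isSyzygySES R K''
  obtain ⟨_, _, g, _, _, h₁, -, hg, hg'', -, -⟩ := exists_isSyzygySES_horseshoe hjq h₁' h₁''
  refine ⟨Q', P', Q'', P'', f' ∘ₗ g', e', f ∘ₗ g, e, f'' ∘ₗ g'', e'',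
    h'.isProjPresentation h₁'.isSES.2.1 h₁'.finite h₁'.projective,
    h.isProjPresentation h₁.isSES.2.1 h₁.finite h₁.projective,
    h''.isProjPresentation h₁''.isSES.2.1 h₁''.finite h₁''.projective, he, ?_, ?_⟩
  · rw [LinearMap.comp_assoc, hg, ← LinearMap.comp_assoc, hfj, LinearMap.comp_assoc]
  · rw [LinearMap.comp_assoc, hg'', ← LinearMap.comp_assoc, hfq, LinearMap.comp_assoc]

lemma exists_isSES_isAuslanderTranspose [IsNoetherianRing R] {M' M M'' : ModuleCat.{u} R}
    [Module.Finite R M'] [Module.Finite R M''] {i : M' →ₗ[R] M} {π : M →ₗ[R] M''}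
    (hs : IsSES i π) (hext : ∀ φ : M' →ₗ[R] R, ∃ ψ : M →ₗ[R] R, ψ ∘ₗ i = φ) :
    ∃ (T'' T T' : ModuleCat.{u} R) (p : T'' →ₗ[R] T) (q : T →ₗ[R] T'),
      IsAuslanderTranspose M'' T'' ∧ IsAuslanderTranspose M T ∧ IsAuslanderTranspose M' T' ∧
      IsSES p q := by
  obtain ⟨P₁', P₀', P₁'', P₀'', d', e', d, e, d'', e'', h', h, h'', he, hd, hd''⟩ :=
    exists_isProjPresentation_horseshoe hs
  obtain ⟨p, q, hpq⟩ := exists_isSES_coker (isSES_dualMap_snd_inl (A := P₀') (B := P₀''))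
    (isSES_dualMap_snd_inl (A := P₁') (B := P₁''))
    (LinearMap.exact_map_mkQ_range d''.dualMap) (Submodule.mkQ_surjective _)
    (LinearMap.exact_map_mkQ_range d.dualMap) (Submodule.mkQ_surjective _)
    (LinearMap.exact_map_mkQ_range d'.dualMap) (Submodule.mkQ_surjective _)
    (congrArg LinearMap.dualMap hd'').symm (congrArg LinearMap.dualMap hd).symm fun φ hφ => by
      obtain ⟨θ, rfl⟩ := exists_desc_of_exact h'.exact h'.surjective hφ
      obtain ⟨ψ, rfl⟩ := hext θ
      refine ⟨ψ ∘ₗ e, ?_, ?_⟩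
      · exact LinearMap.ext fun x => by simp [h.exact.apply_apply_eq_zero]
      · exact (congrArg (ψ ∘ₗ ·) he :)
  exact ⟨_, _, _, p, q, isAuslanderTranspose_quotient h'',
    isAuslanderTranspose_quotient (P₁ := .of R (P₁' × P₁'')) (P₀ := .of R (P₀' × P₀'')) h,
    isAuslanderTranspose_quotient h', hpq⟩

lemma IsAuslanderTranspose.isTransposeSyz {L T : ModuleCat.{u} R} (h : IsAuslanderTranspose L T) :
    IsTransposeSyz 0 L T :=
  ⟨L, ⟨.refl R L⟩, h⟩

lemma IsTransposeSyz.succ {n : ℕ} {K P L T : ModuleCat.{u} R} {f : K →ₗ[R] P}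
    {g : P →ₗ[R] L} (hT : IsTransposeSyz n K T) (h : IsSyzygySES f g) :
    IsTransposeSyz (n + 1) L T := by
  obtain ⟨Ω, hΩ, hT⟩ := hT
  exact ⟨Ω, ⟨P, g, K, f, h.finite, h.projective, h.isSES.2.1, h.isSES.1, h.isSES.2.2, hΩ⟩, hT⟩

lemma exists_isTransposeSyz [IsNoetherianRing R] (n : ℕ) (L : ModuleCat.{u} R)
    [Module.Finite R L] : ∃ T, IsTransposeSyz n L T := by
  induction n generalizing L with
  | zero =>
    obtain ⟨_, _, _, _, h⟩ := exists_isProjPresentation L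
    exact ⟨_, (isAuslanderTranspose_quotient h).isTransposeSyz⟩
  | succ n ih =>
    obtain ⟨K, P, f, g, _, h⟩ := exists_isSyzygySES R L
    obtain ⟨T, hT⟩ := ih K
    exact ⟨T, hT.succ h⟩

lemma IsTransposeSyz.finite {n : ℕ} {L T : ModuleCat.{u} R} (h : IsTransposeSyz n L T) :
    Module.Finite R T :=
  let ⟨_, _, hT⟩ := h
  hT.finite

lemma IsStableRetract.of_isTransposeSyz {n : ℕ} {L L₂ T T₂ : ModuleCat.{u} R}
    (hL : IsStableRetract L L₂) (h : IsTransposeSyz n L T) (h₂ : IsTransposeSyz n L₂ T₂) :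
    IsStableRetract T T₂ := by
  obtain ⟨⟨K, hK, hT⟩, ⟨K₂, hK₂, hT₂⟩⟩ := And.intro h h₂
  exact (hL.of_isSyz hK hK₂).of_isAuslanderTranspose hT hT₂

lemma exists_isSES_isTransposeSyz [IsNoetherianRing R] {n : ℕ} {L' L L'' : ModuleCat.{u} R}
    [Module.Finite R L'] [Module.Finite R L''] {i : L' →ₗ[R] L} {π : L →ₗ[R] L''}
    (hs : IsSES i π) (hL' : Subsingleton (Ext.{u} L' (.of R R) n)) :
    ∃ (T'' T T' : ModuleCat.{u} R) (p : T'' →ₗ[R] T) (q : T →ₗ[R] T'),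
      IsTransposeSyz n L'' T'' ∧ IsTransposeSyz n L T ∧ IsTransposeSyz n L' T' ∧ IsSES p q := by
  induction n generalizing L' L L'' with
  | zero =>
    obtain ⟨T'', T, T', p, q, hT'', hT, hT', hpq⟩ := exists_isSES_isAuslanderTranspose hs
      fun φ => ⟨0, by rw [LinearMap.zero_comp, eq_zero_of_subsingleton_ext_zero hL' φ]⟩
    exact ⟨T'', T, T', p, q, hT''.isTransposeSyz, hT.isTransposeSyz, hT'.isTransposeSyz, hpq⟩
  | succ n ih =>
    obtain ⟨K', P', f', e', _, h'⟩ := exists_isSyzygySES R L'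
    obtain ⟨K'', P'', f'', e'', _, h''⟩ := exists_isSyzygySES R L''
    obtain ⟨K, f, e, j, r, h, hjr, -, -, hfj, -⟩ := exists_isSyzygySES_horseshoe hs h' h''
    obtain ⟨T'', T, T', p, q, hT'', hT, hT', hpq⟩ : ∃ (T'' T T' : ModuleCat.{u} R)
        (p : T'' →ₗ[R] T) (q : T →ₗ[R] T'), IsTransposeSyz n K'' T'' ∧ IsTransposeSyz n K T ∧
        IsTransposeSyz n K' T' ∧ IsSES p q := by
      cases n with
      | zero =>
        obtain ⟨T'', T, T', p, q, hT'', hT, hT', hpq⟩ := exists_isSES_isAuslanderTranspose hjr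
          fun φ => by
            obtain ⟨ψ, rfl⟩ := h'.isSES.exists_extension hL' φ
            exact ⟨ψ ∘ₗ LinearMap.fst R P' P'' ∘ₗ f, by
              rw [LinearMap.comp_assoc, LinearMap.comp_assoc, hfj]
              rfl⟩
        exact ⟨T'', T, T', p, q, hT''.isTransposeSyz, hT.isTransposeSyz, hT'.isTransposeSyz, hpq⟩
      | succ n => exact ih hjr (h'.subsingleton_ext hL')
    exact ⟨T'', T, T', p, q, hT''.succ h'', hT.succ (P := .of R (P' × P'')) h, hT'.succ h', hpq⟩

lemma exists_isSyzygySES_isAuslanderTranspose [IsNoetherianRing R] (L : ModuleCat.{u} R)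
    [Module.Finite R L] (hL : Subsingleton (Ext.{u} L (.of R R) 0)) :
    ∃ (K P T : ModuleCat.{u} R) (p : K →ₗ[R] P) (q : P →ₗ[R] T),
      Module.Finite R K ∧ Module.Projective R K ∧ IsAuslanderTranspose L T ∧
      IsSyzygySES p q := by
  obtain ⟨P₁, P₀, d, e, h⟩ := exists_isProjPresentation L
  have := h.finite₀; have := h.projective₀; have := h.finite₁; have := h.projective₁
  refine ⟨.of R (Module.Dual R P₀), .of R (Module.Dual R P₁), _, d.dualMap, Submodule.mkQ _,
    inferInstanceAs (Module.Finite R (Module.Dual R P₀)),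
    inferInstanceAs (Module.Projective R (Module.Dual R P₀)), isAuslanderTranspose_quotient h,
    isSES_of_exact ?_ (Submodule.mkQ_surjective _) (LinearMap.exact_map_mkQ_range _),
    inferInstanceAs (Module.Finite R (Module.Dual R P₁)),
    inferInstanceAs (Module.Projective R (Module.Dual R P₁))⟩
  refine (injective_iff_map_eq_zero _).2 fun φ hφ => ?_
  obtain ⟨ψ, rfl⟩ := exists_desc_of_exact h.exact h.surjective hφ
  rw [eq_zero_of_subsingleton_ext_zero hL ψ, LinearMap.zero_comp]

lemma exists_isSyzygySES_isTransposeSyz [IsNoetherianRing R] {n : ℕ} (L : ModuleCat.{u} R)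
    [Module.Finite R L] (hL : Subsingleton (Ext.{u} L (.of R R) (n + 1))) :
    ∃ (T G T' : ModuleCat.{u} R) (p : T →ₗ[R] G) (q : G →ₗ[R] T'),
      IsTransposeSyz n L T ∧ IsTransposeSyz (n + 1) L T' ∧ IsSyzygySES p q := by
  induction n generalizing L with
  | zero =>
    obtain ⟨K, P, f, g, _, h⟩ := exists_isSyzygySES R L
    obtain ⟨P₂, P₁, d, e, h₁⟩ := exists_isProjPresentation K
    have := h₁.finite₁; have := h₁.projective₁
    have hpres := h.isProjPresentation h₁.surjective h₁.finite₀ h₁.projective₀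
    have hexact : Function.Exact (f ∘ₗ e).dualMap d.dualMap := by
      have hf : Function.Surjective f.dualMap := h.isSES.exists_extension hL
      rw [← LinearMap.dualMap_comp_dualMap]
      exact (hf.comp_exact_iff_exact).2 (exact_dualMap h₁.exact h₁.surjective)
    obtain ⟨p, hp⟩ := exists_isSES_coker_of_exact hexact (LinearMap.exact_map_mkQ_range _)
      (Submodule.mkQ_surjective _) (LinearMap.exact_map_mkQ_range _) (Submodule.mkQ_surjective _)
    exact ⟨_, .of R (Module.Dual R P₂), _, p, _,
      (isAuslanderTranspose_quotient hpres).isTransposeSyz,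
      (isAuslanderTranspose_quotient h₁).isTransposeSyz.succ h, hp,
      inferInstanceAs (Module.Finite R (Module.Dual R P₂)),
      inferInstanceAs (Module.Projective R (Module.Dual R P₂))⟩
  | succ n ih =>
    obtain ⟨K, P, f, g, _, h⟩ := exists_isSyzygySES R L
    obtain ⟨T, G, T', p, q, hT, hT', hpq⟩ := ih K (h.subsingleton_ext hL)
    exact ⟨T, G, T', p, q, hT.succ h, hT'.succ h, hpq⟩

end Transposes

section SyzygyPreimage

/-- The finite modules having some first syzygy in `𝒳`. For `𝒳` resolving, membership does not
depend on the choice of the syzygy, and iterating the construction filters the finite modules by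
how many syzygies it takes to enter `𝒳`. -/
def syzygyPreimage (𝒳 : Set (ModuleCat.{u} R)) : Set (ModuleCat.{u} R) :=
  {M | Module.Finite R M ∧ ∃ (K P : ModuleCat.{u} R) (f : K →ₗ[R] P) (g : P →ₗ[R] M),
    IsSyzygySES f g ∧ K ∈ 𝒳}

variable {𝒳 : Set (ModuleCat.{u} R)}

lemma IsResolving.mem_of_isSyzygySES (h𝒳 : IsResolving R 𝒳) {K P M : ModuleCat.{u} R}
    {f : K →ₗ[R] P} {g : P →ₗ[R] M} (h : IsSyzygySES f g) (hM : M ∈ syzygyPreimage 𝒳) : K ∈ 𝒳 := by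
  obtain ⟨-, K₂, P₂, f₂, g₂, h₂, hK₂⟩ := hM
  exact h𝒳.mem_of_isStableRetract ((IsStableRetract.refl M).of_isSyzygySES h h₂) hK₂

lemma IsResolving.mem_left_of_isSES (h𝒳 : IsResolving R 𝒳) {A B C : ModuleCat.{u} R}
    {f : A →ₗ[R] B} {g : B →ₗ[R] C} (hs : IsSES f g) (hB : B ∈ 𝒳)
    (hC : C ∈ syzygyPreimage 𝒳) : A ∈ 𝒳 := by
  obtain ⟨-, K, P, i, p, h, hK⟩ := hC
  have := h.projective
  have hid : IsSES (0 : PUnit.{u + 1} →ₗ[R] A) LinearMap.id :=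
    ⟨fun _ _ _ => rfl, Function.surjective_id, by rw [LinearMap.range_zero, LinearMap.ker_id]⟩
  obtain ⟨N, ν, e, j, q, hNe, hjq, -⟩ := exists_isSES_horseshoe hs hid h.isSES
  have hN : N ∈ 𝒳 := h𝒳.ext_closed (.of R PUnit.{u + 1}) N K j q hjq
    (h𝒳.proj_mem _ (inferInstanceAs (Module.Finite R PUnit.{u + 1}))
      (inferInstanceAs (Module.Projective R PUnit.{u + 1}))) hK
  exact h𝒳.summand_closed A P (h𝒳.ext_closed N (.of R (A × P)) B ν e hNe hN hB)

variable [IsNoetherianRing R]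

lemma IsResolving.subset_syzygyPreimage (h𝒳 : IsResolving R 𝒳) : 𝒳 ⊆ syzygyPreimage 𝒳 := by
  intro M hM
  have := h𝒳.fg M hM
  obtain ⟨K, P, f, g, hK, h⟩ := exists_isSyzygySES R M
  exact ⟨this, K, P, f, g, h, h𝒳.syzygy_closed K P M f g h.isSES hK h.finite h.projective hM⟩

lemma IsResolving.syzygyPreimage_mem_of_isStableRetract (h𝒳 : IsResolving R 𝒳)
    {M N : ModuleCat.{u} R} [Module.Finite R M] (hMN : IsStableRetract M N)
    (hN : N ∈ syzygyPreimage 𝒳) : M ∈ syzygyPreimage 𝒳 := by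
  obtain ⟨-, K₂, P₂, f₂, g₂, h₂, hK₂⟩ := hN
  obtain ⟨K, P, f, g, _, h⟩ := exists_isSyzygySES R M
  exact ⟨‹_›, K, P, f, g, h, h𝒳.mem_of_isStableRetract (hMN.of_isSyzygySES h h₂) hK₂⟩

lemma IsResolving.isResolving_syzygyPreimage (h𝒳 : IsResolving R 𝒳) :
    IsResolving R (syzygyPreimage 𝒳) where
  fg _ hM := hM.1
  iso_closed := fun M N ⟨e⟩ hM =>
    have := hM.1
    have := Module.Finite.equiv e
    h𝒳.syzygyPreimage_mem_of_isStableRetract (.of_linearEquiv e.symm) hM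
  proj_mem M hM hM' := h𝒳.subset_syzygyPreimage (h𝒳.proj_mem M hM hM')
  summand_closed M N h :=
    have : Module.Finite R (M × N) := h.1
    have := Module.Finite.of_surjective (LinearMap.fst R M N) LinearMap.fst_surjective
    h𝒳.syzygyPreimage_mem_of_isStableRetract
      (isStableRetract_of_comp_eq_id (LinearMap.fst_comp_inl R M N)) h
  ext_closed := by
    rintro A B C f g hs ⟨-, K', P', f', e', h', hK'⟩ ⟨-, K'', P'', f'', e'', h'', hK''⟩
    obtain ⟨K, f, e, j, q, h, hjq, -⟩ := exists_isSyzygySES_horseshoe hs h' h''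
    have := h.finite
    exact ⟨.of_surjective e h.isSES.2.1, K, .of R (P' × P''), f, e, h,
      h𝒳.ext_closed K' K K'' j q hjq hK' hK''⟩
  syzygy_closed _ _ _ _ _ hs _ hP hP' hM :=
    h𝒳.subset_syzygyPreimage (h𝒳.mem_of_isSyzygySES ⟨hs, hP, hP'⟩ hM)

lemma IsResolving.isResolving_iterate_syzygyPreimage (h𝒳 : IsResolving R 𝒳) (s : ℕ) :
    IsResolving R (syzygyPreimage^[s] 𝒳) :=
  Function.Iterate.rec (IsResolving R) h𝒳 (fun _ => IsResolving.isResolving_syzygyPreimage) s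

end SyzygyPreimage

section TransposeSyzPreimage

open CategoryTheory.Abelian

/-- The modules `L` such that `Tr Ω^n L` lies in `𝒳`. -/
def transposeSyzPreimage (n : ℕ) (𝒳 : Set (ModuleCat.{u} R)) : Set (ModuleCat.{u} R) :=
  {L | ∃ T ∈ 𝒳, IsTransposeSyz n L T}

lemma transposeSyzPreimage_mono (n : ℕ) :
    Monotone (transposeSyzPreimage n : Set (ModuleCat.{u} R) → _) :=
  fun _ _ h _ ⟨T, hT, hLT⟩ => ⟨T, h hT, hLT⟩

variable {n : ℕ} {𝒳 : Set (ModuleCat.{u} R)}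

lemma IsTransposeSyz.mem_iff {L T : ModuleCat.{u} R} (hT : IsTransposeSyz n L T)
    (h𝒳 : IsResolving R 𝒳) : T ∈ 𝒳 ↔ L ∈ transposeSyzPreimage n 𝒳 := by
  refine ⟨fun h => ⟨T, h, hT⟩, fun ⟨S, hS, hLS⟩ => ?_⟩
  exact h𝒳.mem_of_isStableRetract ((IsStableRetract.refl L).of_isTransposeSyz hT hLS) hS

variable [IsNoetherianRing R]

lemma IsResolving.transposeSyzPreimage_mem_of_isStableRetract (h𝒳 : IsResolving R 𝒳)
    {L L' : ModuleCat.{u} R} [Module.Finite R L] (h : IsStableRetract L L')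
    (hL' : L' ∈ transposeSyzPreimage n 𝒳) : L ∈ transposeSyzPreimage n 𝒳 := by
  obtain ⟨T, hT⟩ := exists_isTransposeSyz n L
  obtain ⟨T', hT'𝒳, hT'⟩ := hL'
  exact ⟨T, h𝒳.mem_of_isStableRetract (h.of_isTransposeSyz hT hT') hT'𝒳, hT⟩

lemma IsResolving.transposeSyzPreimage_mem_of_isSES (h𝒳 : IsResolving R 𝒳)
    {L' L L'' : ModuleCat.{u} R} [Module.Finite R L'] [Module.Finite R L''] {i : L' →ₗ[R] L}
    {π : L →ₗ[R] L''} (hs : IsSES i π) (hL' : Subsingleton (Ext.{u} L' (.of R R) n))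
    (h' : L' ∈ transposeSyzPreimage n 𝒳) (h'' : L'' ∈ transposeSyzPreimage n 𝒳) :
    L ∈ transposeSyzPreimage n 𝒳 := by
  obtain ⟨T'', T, T', p, q, hT'', hT, hT', hpq⟩ := exists_isSES_isTransposeSyz hs hL'
  exact ⟨T, h𝒳.ext_closed T'' T T' p q hpq ((hT''.mem_iff h𝒳).2 h'') ((hT'.mem_iff h𝒳).2 h'), hT⟩

lemma IsResolving.transposeSyzPreimage_mem_right_of_isSES (h𝒳 : IsResolving R 𝒳)
    {L' L L'' : ModuleCat.{u} R} [Module.Finite R L'] [Module.Finite R L''] {i : L' →ₗ[R] L}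
    {π : L →ₗ[R] L''} (hs : IsSES i π) (hL' : Subsingleton (Ext.{u} L' (.of R R) n))
    (h' : L' ∈ transposeSyzPreimage n (syzygyPreimage 𝒳)) (h : L ∈ transposeSyzPreimage n 𝒳) :
    L'' ∈ transposeSyzPreimage n 𝒳 := by
  obtain ⟨T'', T, T', p, q, hT'', hT, hT', hpq⟩ := exists_isSES_isTransposeSyz hs hL'
  exact ⟨T'', h𝒳.mem_left_of_isSES hpq ((hT.mem_iff h𝒳).2 h)
    ((hT'.mem_iff h𝒳.isResolving_syzygyPreimage).2 h'), hT''⟩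

lemma IsResolving.mem_transposeSyzPreimage_iterate_syzygyPreimage (h𝒳 : IsResolving R 𝒳)
    (L : ModuleCat.{u} R) [Module.Finite R L]
    (hL : ∀ i ≤ n, Subsingleton (Ext.{u} L (.of R R) i)) :
    L ∈ transposeSyzPreimage n (syzygyPreimage^[n + 1] 𝒳) := by
  induction n with
  | zero =>
    obtain ⟨K, P, T, p, q, hK, hK', hT, hpq⟩ :=
      exists_isSyzygySES_isAuslanderTranspose L (hL 0 le_rfl)
    exact ⟨T, ⟨hT.finite, K, P, p, q, hpq, h𝒳.proj_mem K hK hK'⟩, hT.isTransposeSyz⟩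
  | succ n ih =>
    obtain ⟨T, G, T', p, q, hT, hT', hpq⟩ := exists_isSyzygySES_isTransposeSyz L (hL _ le_rfl)
    rw [Function.iterate_succ_apply']
    have hT𝒳 : T ∈ syzygyPreimage^[n + 1] 𝒳 :=
      (hT.mem_iff (h𝒳.isResolving_iterate_syzygyPreimage _)).2
        (ih fun i hi => hL i (hi.trans n.le_succ))
    exact ⟨T', ⟨hT'.finite, T, G, p, q, hpq, hT𝒳⟩, hT'⟩

end TransposeSyzPreimage

section FiniteLength

open CategoryTheory.Abelian IsLocalRing

variable {M : Type u} [AddCommGroup M] [Module R M]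

lemma finite_of_isFiniteLength (h : IsFiniteLength R M) : Module.Finite R M :=
  have := (isFiniteLength_iff_isNoetherian_isArtinian.1 h).1
  inferInstance

variable [IsLocalRing R]

lemma exists_isSES_residueMod (N : Submodule R M) [IsSimpleModule R (M ⧸ N)] :
    ∃ π : M →ₗ[R] residueMod R, IsSES N.subtype π := by
  obtain ⟨I, hI, ⟨e⟩⟩ := isSimpleModule_iff_quot_maximal.1 ‹IsSimpleModule R (M ⧸ N)›
  obtain rfl := eq_maximalIdeal hI
  have h : IsSES N.subtype N.mkQ :=
    isSES_of_exact N.injective_subtype N.mkQ_surjective (LinearMap.exact_subtype_mkQ N)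
  exact ⟨_, h.comp_linearEquiv e⟩

lemma isFiniteLength_residueMod : IsFiniteLength R (residueMod R) := by
  have : IsSimpleModule R (residueMod R) :=
    isSimpleModule_iff_quot_maximal.2 ⟨_, maximalIdeal.isMaximal R, ⟨.refl R _⟩⟩
  exact isFiniteLength_iff_isNoetherian_isArtinian.2 ⟨inferInstance, inferInstance⟩

lemma support_subset_of_isFiniteLength (h : IsFiniteLength R M) :
    Module.support R M ⊆ PrimeSpectrum.zeroLocus (maximalIdeal R : Set R) := by
  induction h with
  | of_subsingleton => simp only [Module.support_eq_empty, Set.empty_subset]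
  | @of_simple_quotient M _ _ N _ _ ih =>
    obtain ⟨π, h⟩ := exists_isSES_residueMod N
    have hk : Module.support R (residueMod R) = PrimeSpectrum.zeroLocus (maximalIdeal R) := by
      rw [Module.support_eq_zeroLocus]
      exact congrArg (PrimeSpectrum.zeroLocus <| SetLike.coe ·) Ideal.annihilator_quotient
    rw [Module.support_of_exact h.exact h.1 h.2.1, hk]
    exact Set.union_subset ih subset_rfl

lemma subsingleton_ext_of_lt_depthE [IsNoetherianRing R] {L N : ModuleCat.{u} R}
    [Module.Finite R N] [Nontrivial N] (hL : IsFiniteLength R L) {i : ℕ}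
    (hi : i < depthE R (maximalIdeal R) N) : Subsingleton (Ext.{u} L N i) := by
  obtain ⟨_, ⟨rs, hmem, hreg, rfl⟩, hrs⟩ := lt_sSup_iff.1 hi
  have := finite_of_isFiniteLength hL
  exact ModuleCat.subsingleton_ext_of_exists_isRegular (maximalIdeal R) L
    (support_subset_of_isFiniteLength hL) N
    (Submodule.top_ne_ideal_smul_of_le_jacobson_annihilator
      (maximalIdeal_le_jacobson _)).symm.lt_top rs hmem
    ((isRegular_iff_isWeaklyRegular_of_subset_maximalIdeal hmem).2 hreg) i (Nat.cast_lt.1 hrs)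

variable [IsNoetherianRing R] {n : ℕ} {𝒳 : Set (ModuleCat.{u} R)}

lemma IsResolving.transposeSyzPreimage_mem_of_residueMod_mem (h𝒳 : IsResolving R 𝒳)
    (hn : n < depthE R (maximalIdeal R) R) (hk : residueMod R ∈ transposeSyzPreimage n 𝒳)
    (hM : IsFiniteLength R M) : ModuleCat.of R M ∈ transposeSyzPreimage n 𝒳 := by
  induction hM with
  | of_subsingleton =>
    exact h𝒳.transposeSyzPreimage_mem_of_isStableRetract (.of_subsingleton _ _) hk
  | @of_simple_quotient M _ _ N _ hN ih =>
    obtain ⟨π, hπ⟩ := exists_isSES_residueMod N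
    have : Module.Finite R N := finite_of_isFiniteLength hN
    have : Module.Finite R (residueMod R) := finite_of_isFiniteLength isFiniteLength_residueMod
    exact h𝒳.transposeSyzPreimage_mem_of_isSES (L' := .of R N) (L := .of R M) hπ
      (subsingleton_ext_of_lt_depthE hN hn) ih hk

lemma IsResolving.residueMod_mem_of_mem_iterate (h𝒳 : IsResolving R 𝒳)
    (hn : n < depthE R (maximalIdeal R) R) [Nontrivial M] (hM : IsFiniteLength R M)
    (h : ModuleCat.of R M ∈ transposeSyzPreimage n 𝒳) {s : ℕ}
    (hk : residueMod R ∈ transposeSyzPreimage n (syzygyPreimage^[s] 𝒳)) :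
    residueMod R ∈ transposeSyzPreimage n 𝒳 := by
  induction s generalizing 𝒳 with
  | zero => exact hk
  | succ s ih =>
    rw [Function.iterate_succ_apply] at hk
    have hk' : residueMod R ∈ transposeSyzPreimage n (syzygyPreimage 𝒳) :=
      ih h𝒳.isResolving_syzygyPreimage
        (transposeSyzPreimage_mono n h𝒳.subset_syzygyPreimage h) hk
    cases hM with
    | of_subsingleton => exact absurd ‹Nontrivial M› (not_nontrivial M)
    | @of_simple_quotient _ _ _ N _ hN =>
      obtain ⟨π, hπ⟩ := exists_isSES_residueMod N
      have : Module.Finite R N := finite_of_isFiniteLength hN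
      have : Module.Finite R (residueMod R) := finite_of_isFiniteLength isFiniteLength_residueMod
      exact h𝒳.transposeSyzPreimage_mem_right_of_isSES (L' := .of R N) (L := .of R M) hπ
        (subsingleton_ext_of_lt_depthE hN hn)
        (h𝒳.isResolving_syzygyPreimage.transposeSyzPreimage_mem_of_residueMod_mem hn hk' hN) h

lemma IsResolving.mem_transposeSyzPreimage_iff_residueMod_mem (h𝒳 : IsResolving R 𝒳)
    (hn : n < depthE R (maximalIdeal R) R) [Nontrivial M] (hM : IsFiniteLength R M) :
    ModuleCat.of R M ∈ transposeSyzPreimage n 𝒳 ↔ residueMod R ∈ transposeSyzPreimage n 𝒳 := by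
  refine ⟨fun h => ?_, fun hk => h𝒳.transposeSyzPreimage_mem_of_residueMod_mem hn hk hM⟩
  have : Module.Finite R (residueMod R) := finite_of_isFiniteLength isFiniteLength_residueMod
  exact h𝒳.residueMod_mem_of_mem_iterate hn hM h
    (h𝒳.mem_transposeSyzPreimage_iterate_syzygyPreimage (residueMod R) fun i hi =>
      subsingleton_ext_of_lt_depthE isFiniteLength_residueMod
        ((Nat.cast_le.2 hi).trans_lt hn))

end FiniteLength

section MinimalResolutions

variable [IsLocalRing R]

lemma IsMinSyz.isSyz {n : ℕ} {M K : ModuleCat.{u} R} (h : IsMinSyz R n M K) : IsSyz R n M K := by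
  induction n generalizing M with
  | zero => exact h
  | succ n ih =>
    obtain ⟨F, g, K', i, hF, hF', hg, -, hi, hig, hK⟩ := h
    exact ⟨F, g, K', i, hF, .of_free, hg, hi, hig, ih hK⟩

lemma IsTranspose.isAuslanderTranspose {M T : ModuleCat.{u} R} (h : IsTranspose R M T) :
    IsAuslanderTranspose M T := by
  obtain ⟨F₁, F₀, d, e, hF₀, _, hF₁, _, he, hde, -, -, ⟨τ⟩⟩ := h
  refine ⟨F₁, F₀, d, e, τ.symm.toLinearMap ∘ₗ Submodule.mkQ _,
    ⟨LinearMap.exact_iff.2 hde.symm, he, hF₁, .of_free, hF₀, .of_free⟩, ?_,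
    τ.symm.surjective.comp (Submodule.mkQ_surjective _)⟩
  rw [LinearMap.exact_iff, LinearEquiv.ker_comp, Submodule.ker_mkQ]

lemma IsTrOmega.isTransposeSyz {n : ℕ} {M T : ModuleCat.{u} R} (h : IsTrOmega R n M T) :
    IsTransposeSyz n M T :=
  let ⟨K, hK, hT⟩ := h
  ⟨K, hK.isSyz, hT.isAuslanderTranspose⟩

end MinimalResolutions

lemma resClosure_singleton_congr {T T' : ModuleCat.{u} R}
    (h : ∀ 𝒳, IsResolving R 𝒳 → (T ∈ 𝒳 ↔ T' ∈ 𝒳)) : resClosure R {T} = resClosure R {T'} := by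
  have : {𝒳 | IsResolving R 𝒳 ∧ {T} ⊆ 𝒳} = {𝒳 | IsResolving R 𝒳 ∧ {T'} ⊆ 𝒳} :=
    Set.ext fun 𝒳 => and_congr_right fun h𝒳 => by
      rw [Set.singleton_subset_iff, Set.singleton_subset_iff, h 𝒳 h𝒳]
  exact congrArg Set.sInter this

theorem resClosure_trOmega_finite_length_general [IsNoetherianRing R] [IsLocalRing R] {n : ℕ}
    (hn : n < depthE R (IsLocalRing.maximalIdeal R) R) {L : ModuleCat.{u} R} [Nontrivial L]
    (hL : IsFiniteLength R L) {T T' : ModuleCat.{u} R} (hT : IsTransposeSyz n L T)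
    (hT' : IsTransposeSyz n (residueMod R) T') : resClosure R {T} = resClosure R {T'} :=
  resClosure_singleton_congr fun 𝒳 h𝒳 =>
    calc T ∈ 𝒳 ↔ L ∈ transposeSyzPreimage n 𝒳 := hT.mem_iff h𝒳
      _ ↔ residueMod R ∈ transposeSyzPreimage n 𝒳 :=
        h𝒳.mem_transposeSyzPreimage_iff_residueMod_mem hn hL
      _ ↔ T' ∈ 𝒳 := (hT'.mem_iff h𝒳).symm

end

/-- Proposition 2.6: over a local ring of depth `t > 0`, for a nonzero module `L` of
finite length and `0 ≤ n < t` one has `res (Tr Ω^n L) = res (Tr Ω^n k)`. -/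
theorem resClosure_trOmega_finite_length [IsNoetherianRing R] [IsLocalRing R]
    (t : ℕ) (hdepth : depthE R (IsLocalRing.maximalIdeal R) R = (t : ℕ∞)) (htpos : 0 < t)
    (L : ModuleCat.{u} R) (hL : Nontrivial L) (hlen : IsFiniteLength R L)
    (n : ℕ) (hn : n < t)
    (T T' : ModuleCat.{u} R)
    (hT : IsTrOmega R n L T) (hT' : IsTrOmega R n (residueMod R) T') :
    resClosure R {T} = resClosure R {T'} := by
  exact resClosure_trOmega_finite_length_general (hdepth ▸ Nat.cast_lt.2 hn) hlen
    hT.isTransposeSyz hT'.isTransposeSyz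

end ResolvPaper
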